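/- For every real κ with 0 ≤ κ < 1 and all reals α, β with 0 ≤ α ≤ 1/2 and 1/2 ≤ β ≤ 1, the function f(α,β) = (αβ − 2^{κ-2})² + (αβ − 2^{κ-4})² + (α(1−β) − 2^{κ-4})² satisfies f(α,β) ≥ 9·2^{2κ}/512, with equality at α = (7/32)·2^κ and β = 5/7. -/

import Mathlib

noncomputable section

/-- The function `f(α,β) = (αβ − 2^{κ-2})² + (αβ − 2^{κ-4})² + (α(1−β) − 2^{κ-4})²`. -/
def fCase2 (κ α β : ℝ) : ℝ :=
  (α * β - (2:ℝ) ^ (κ - 2)) ^ 2 + (α * β - (2:ℝ) ^ (κ - 4)) ^ 2 +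
    (α * (1 - β) - (2:ℝ) ^ (κ - 4)) ^ 2

theorem sq_sub_add_sq_sub_eq_two_mul_sq_sub_midpoint {K : Type*} [Field K] [NeZero (2 : K)]
    (x a b : K) :
    (x - a) ^ 2 + (x - b) ^ 2 = 2 * (x - (a + b) / 2) ^ 2 + (a - b) ^ 2 / 2 := by
  field_simp
  ring

/- Both squares vanish when `α = αβ + α(1 - β) = (5/32 + 1/16) 2^κ` and
`β = (5/32) / (5/32 + 1/16)`, which is where the minimiser `((7/32) 2^κ, 5/7)` comes from. -/
theorem fCase2_eq_add_sq_add_sq (κ α β : ℝ) :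
    fCase2 κ α β = 9 * (2:ℝ) ^ (2 * κ) / 512 +
      (2 * (α * β - 5 / 32 * (2:ℝ) ^ κ) ^ 2 + (α * (1 - β) - (2:ℝ) ^ κ / 16) ^ 2) := by
  have two_rpow_sub_two : (2:ℝ) ^ (κ - 2) = (2:ℝ) ^ κ / 4 := by
    rw [Real.rpow_sub two_pos]; norm_num
  have two_rpow_sub_four : (2:ℝ) ^ (κ - 4) = (2:ℝ) ^ κ / 16 := by
    rw [Real.rpow_sub two_pos]; norm_num
  have two_rpow_two_mul : (2:ℝ) ^ (2 * κ) = ((2:ℝ) ^ κ) ^ 2 := by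
    rw [mul_comm, Real.rpow_mul two_pos.le, Real.rpow_two]
  rw [fCase2, sq_sub_add_sq_sub_eq_two_mul_sq_sub_midpoint, two_rpow_sub_two,
    two_rpow_sub_four, two_rpow_two_mul]
  ring

theorem fCase2_min_general (κ : ℝ) :
    (∀ α β : ℝ, 9 * (2:ℝ) ^ (2 * κ) / 512 ≤ fCase2 κ α β) ∧
      fCase2 κ ((7/32) * (2:ℝ) ^ κ) (5/7) = 9 * (2:ℝ) ^ (2 * κ) / 512 := by
  constructor
  · intro α β
    rw [fCase2_eq_add_sq_add_sq]
    exact le_add_of_nonneg_right (by positivity)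
  · rw [fCase2_eq_add_sq_add_sq]
    ring

/-- For `0 ≤ κ < 1`, `0 ≤ α ≤ 1/2` and `1/2 ≤ β ≤ 1` one has
`f(α,β) ≥ 9·2^{2κ}/512`, with equality at `α = (7/32)·2^κ`, `β = 5/7`. -/
theorem fCase2_min (κ : ℝ) (hκ0 : 0 ≤ κ) (hκ1 : κ < 1) :
    (∀ α β : ℝ, 0 ≤ α → α ≤ 1/2 → 1/2 ≤ β → β ≤ 1 →
      9 * (2:ℝ) ^ (2 * κ) / 512 ≤ fCase2 κ α β) ∧
    fCase2 κ ((7/32) * (2:ℝ) ^ κ) (5/7) = 9 * (2:ℝ) ^ (2 * κ) / 512 := by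
  obtain ⟨lower_bound, eq_at_minimiser⟩ := fCase2_min_general κ
  exact ⟨fun α β _ _ _ _ => lower_bound α β, eq_at_minimiser⟩

end
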